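/- For every ε > 0 and every integer m ≥ 1, there exists L such that every 2^n-edge-connected graph G with minimum degree at least L, where n = 2 + m + ⌈log₂(1/ε)⌉, contains 2^m pairwise edge-disjoint spanning trees T₁,…,T_{2^m} with Σ_{i∈[2^m]} deg_{T_i}(v) ≤ ε·deg_G(v) for every vertex v. -/

import Mathlib

/-- A simple graph is `k`-edge-connected: deleting any fewer than `k` edges leaves
it connected. -/
def SGEdgeConn {V : Type} (G : SimpleGraph V) (k : ℕ) : Prop :=
  ∀ s : Set (Sym2 V), s ⊆ G.edgeSet → Nat.card s < k → (G.deleteEdges s).Connected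

/-!
Write `k` for the number of trees wanted. In a `K`-edge-connected graph every component left by
deleting edges is bounded by at least `K` of them, so for `2k ≤ K` the `k`-fold graphic matroid has
a fractional base `x` with all coordinates at most `2k / K`: its degree at `v` is at most
`(2k / K) deg v ≤ (ε / 2) deg v`. Iterated rounding makes `x` integral at the price of an additive
constant at each vertex: at an extreme point with all vertex sums prescribed, tight sets form a
lattice whose atoms contain at least two fractional edges each, and every edge has two ends, so a
dimension count yields a vertex with few fractional edges, whose prescribed sum can be dropped.
Large minimum degree absorbs the constant. The same dimension count, applied to the partition
matroid on `k` coloured copies of the edges, splits the integral point into `k` spanning trees.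
-/

open Finset

section FractionalCoordinates

variable {E : Type*}

/-- The set of coordinates at which the vector `x` is not an integer. A point of the unit cube is a
0/1 vector exactly when its fractional support is empty. -/
noncomputable def fractionalSupport [Fintype E] (x : E → ℝ) : Finset E :=
  open scoped Classical in {e | x e ∉ (Int.castRingHom ℝ).range}

theorem mem_fractionalSupport [Fintype E] {x : E → ℝ} {e : E} :
    e ∈ fractionalSupport x ↔ x e ∉ (Int.castRingHom ℝ).range := by
  simp only [fractionalSupport, mem_filter_univ]

theorem notMem_fractionalSupport [Fintype E] {x : E → ℝ} {e : E} :
    e ∉ fractionalSupport x ↔ x e ∈ (Int.castRingHom ℝ).range := by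
  rw [mem_fractionalSupport, not_not]

theorem fractionalSupport_subset_of_eq_off [Fintype E] {x z : E → ℝ}
    (h : ∀ e ∉ fractionalSupport x, z e = x e) : fractionalSupport z ⊆ fractionalSupport x := by
  intro e hez
  by_contra hex
  rw [mem_fractionalSupport, h e hex] at hez
  exact hez (notMem_fractionalSupport.1 hex)

theorem exists_ne_mem_fractionalSupport [Fintype E] {x : E → ℝ} {C : Finset E}
    (hC : ∑ a ∈ C, x a ∈ (Int.castRingHom ℝ).range) {e : E} (heC : e ∈ C)
    (he : e ∈ fractionalSupport x) : ∃ e' ∈ C, e' ≠ e ∧ e' ∈ fractionalSupport x := by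
  classical
  by_contra! hcon
  refine mem_fractionalSupport.1 he ?_
  rw [eq_sub_of_add_eq (add_sum_erase C x heC)]
  refine sub_mem hC (sum_mem fun a ha => notMem_fractionalSupport.1 ?_)
  exact hcon a (mem_of_mem_erase ha) (ne_of_mem_erase ha)

theorem two_mul_card_image_le {κ : Type*} [DecidableEq κ] {F : Finset E} {c : E → κ}
    (h : ∀ e ∈ F, ∃ e' ∈ F, e' ≠ e ∧ c e' = c e) : 2 * #(F.image c) ≤ #F := by
  classical
  refine mul_card_image_le_card F 2 (forall_mem_image.2 fun e he => ?_)
  obtain ⟨e', he', hne, hc⟩ := h e he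
  exact one_lt_card.2 ⟨e', by simp [he', hc], e, by simp [he], hne⟩

theorem card_le_card_of_sums_injective {F : Finset E} {𝒮 : Finset (Finset E)}
    (h : ∀ d : E → ℝ, (∀ e ∉ F, d e = 0) → (∀ A ∈ 𝒮, ∑ e ∈ A, d e = 0) → d = 0) :
    #F ≤ #𝒮 := by
  let extend : (F → ℝ) →ₗ[ℝ] (E → ℝ) := Function.ExtendByZero.linearMap ℝ Subtype.val
  let sums : (E → ℝ) →ₗ[ℝ] (𝒮 → ℝ) := LinearMap.pi fun A => ∑ e ∈ A.1, LinearMap.proj e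
  have hinj : Function.Injective (sums ∘ₗ extend) := by
    refine (injective_iff_map_eq_zero _).2 fun d hd => ?_
    have hzero : extend d = 0 := by
      refine h _ (fun e he => ?_) fun A hA => ?_
      · exact Function.extend_apply' _ _ _ (by rintro ⟨a, rfl⟩; exact he a.2)
      · simpa [sums] using congrFun hd ⟨A, hA⟩
    funext a
    simpa [extend, Subtype.val_injective.extend_apply] using congrFun hzero a
  simpa using LinearMap.finrank_le_finrank_of_injective hinj

theorem exists_card_inter_le [DecidableEq E] {I : Type*} {F : Finset E} {W : Finset I}
    {δ : I → Finset E} {r : ℕ} (hr : ∀ e ∈ F, #{v ∈ W | e ∈ δ v} ≤ r) (hFW : #F ≤ 2 * #W)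
    (hF : F.Nonempty) : ∃ v ∈ W, #(F ∩ δ v) ≤ 2 * r := by
  by_contra! hcon
  have hcount : #W * (2 * r + 1) ≤ #F * r := by
    refine card_mul_le_card_mul (fun v e => e ∈ δ v) (fun v hv => ?_) hr
    rw [bipartiteAbove, filter_mem_eq_inter]
    exact hcon v hv
  have hpos := hF.card_pos
  nlinarith [Nat.mul_le_mul_right r hFW]

theorem sum_eq_zero_of_forall_mem {d : E → ℝ} {F C : Finset E} (hd : ∀ e ∉ F, d e = 0)
    (h : ∀ e ∈ C, e ∈ F → ∑ a ∈ C, d a = 0) : ∑ a ∈ C, d a = 0 := by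
  by_contra hne
  obtain ⟨a, haC, ha⟩ := exists_ne_zero_of_sum_ne_zero hne
  exact hne (h a haC (by_contra fun haF => ha (hd a haF)))

theorem sum_le_sum_add_card_inter [DecidableEq E] {y z : E → ℝ} {F : Finset E} (hy : ∀ e, y e ≤ 1)
    (hz : ∀ e, 0 ≤ z e) (hyz : ∀ e ∉ F, y e = z e) (A : Finset E) :
    ∑ e ∈ A, y e ≤ ∑ e ∈ A, z e + #(F ∩ A) := by
  calc ∑ e ∈ A, y e ≤ ∑ e ∈ A, (z e + if e ∈ F then 1 else 0) := by
        refine sum_le_sum fun e _ => ?_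
        split_ifs with he
        · linarith [hy e, hz e]
        · rw [hyz e he, add_zero]
    _ = ∑ e ∈ A, z e + #(F ∩ A) := by
        rw [sum_add_distrib, sum_boole, filter_mem_eq_inter, inter_comm]

theorem sum_eq_card_filter_ne_zero {y : E → ℝ} (hy : ∀ e, y e = 0 ∨ y e = 1) (S : Finset E) :
    ∑ e ∈ S, y e = #(S.filter (y · ≠ 0)) := by
  rw [← sum_filter_ne_zero, ← nsmul_one, ← sum_const]
  exact sum_congr rfl fun e he => (hy e).resolve_left (mem_filter.1 he).2

end FractionalCoordinates

section Perturbation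

open Filter Topology

theorem eq_zero_of_mem_extremePoints {M : Type*} [AddCommGroup M] [Module ℝ M] {S : Set M}
    {z d : M} (hz : z ∈ S.extremePoints ℝ) (hd : ∀ᶠ t in 𝓝 (0 : ℝ), z + t • d ∈ S) : d = 0 := by
  have hneg : ∀ᶠ t in 𝓝 (0 : ℝ), z + (-t) • d ∈ S :=
    (continuous_neg.tendsto' (0 : ℝ) 0 neg_zero).eventually hd
  obtain ⟨t, ⟨hplus, hminus⟩, ht⟩ :=
    (((hd.and hneg).filter_mono nhdsWithin_le_nhds).and (self_mem_nhdsWithin (s := {0}ᶜ))).exists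
  have hmid : z ∈ openSegment ℝ (z + t • d) (z + (-t) • d) :=
    ⟨1 / 2, 1 / 2, by norm_num, by norm_num, by norm_num, by module⟩
  exact (smul_eq_zero.1 (add_eq_left.1 (hz.2 hplus hminus hmid))).resolve_left ht

theorem eventually_add_mul_le {a b c : ℝ} (hac : a ≤ c) (hb : a = c → b = 0) :
    ∀ᶠ t in 𝓝 (0 : ℝ), a + t * b ≤ c := by
  rcases hac.eq_or_lt with rfl | hlt
  · simp [hb rfl]
  · have hcont : Continuous fun t : ℝ => a + t * b := by fun_prop
    exact ((hcont.tendsto 0).eventually_lt_const (by simpa using hlt)).mono fun _ => le_of_lt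

theorem sum_add_smul {E : Type*} (x d : E → ℝ) (t : ℝ) (A : Finset E) :
    ∑ e ∈ A, (x + t • d) e = ∑ e ∈ A, x e + t * ∑ e ∈ A, d e := by
  simp only [Pi.add_apply, Pi.smul_apply, smul_eq_mul, sum_add_distrib, mul_sum]

end Perturbation

section FractionalBase

variable {E : Type*} {f : Finset E → ℝ} {x : E → ℝ}

/-- The set `A` is tight for `x` if it attains the constraint `x(A) ≤ f A`. -/
def IsTight (f : Finset E → ℝ) (x : E → ℝ) (A : Finset E) : Prop :=
  ∑ e ∈ A, x e = f A

variable [Fintype E]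

/-- Membership in the base polytope of `f` intersected with the unit cube. When `f` is the rank
function of a matroid, these points are the convex combinations of its bases. -/
structure IsFractionalBase (f : Finset E → ℝ) (x : E → ℝ) : Prop where
  nonneg : ∀ e, 0 ≤ x e
  le_one : ∀ e, x e ≤ 1
  sum_le : ∀ A : Finset E, ∑ e ∈ A, x e ≤ f A
  sum_univ : ∑ e, x e = f univ

theorem IsFractionalBase.eq_zero_or_one (hx : IsFractionalBase f x)
    (hint : fractionalSupport x = ∅) (e : E) : x e = 0 ∨ x e = 1 := by
  obtain ⟨n, hn⟩ := notMem_fractionalSupport.1 (hint ▸ notMem_empty e)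
  rw [eq_intCast] at hn
  have h0 : 0 ≤ n := by exact_mod_cast (hx.nonneg e).trans_eq hn.symm
  have h1 : n ≤ 1 := by exact_mod_cast hn.trans_le (hx.le_one e)
  rw [← hn]
  interval_cases n <;> simp

/-- The atom of `e` in the partition of the ground set generated by the tight sets of `x`. -/
noncomputable def tightAtom (f : Finset E → ℝ) (x : E → ℝ) (e : E) : Finset E :=
  open scoped Classical in {e' | ∀ A, IsTight f x A → (e ∈ A ↔ e' ∈ A)}

theorem mem_tightAtom {e e' : E} :
    e' ∈ tightAtom f x e ↔ ∀ A, IsTight f x A → (e ∈ A ↔ e' ∈ A) := by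
  simp only [tightAtom, mem_filter_univ]

theorem mem_tightAtom_self (e : E) : e ∈ tightAtom f x e :=
  mem_tightAtom.2 fun _ _ => Iff.rfl

theorem tightAtom_eq_iff {e e' : E} :
    tightAtom f x e' = tightAtom f x e ↔ e' ∈ tightAtom f x e := by
  refine ⟨fun h => h ▸ mem_tightAtom_self e', fun h => ?_⟩
  ext a
  simp only [mem_tightAtom]
  exact forall₂_congr fun A hA => by rw [mem_tightAtom.1 h A hA]

theorem isCompact_setOf_isFractionalBase : IsCompact {x | IsFractionalBase f x} := by
  have heq : {x | IsFractionalBase f x} = Set.Icc 0 1 ∩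
      ((⋂ A : Finset E, {x | ∑ e ∈ A, x e ≤ f A}) ∩ {x | ∑ e, x e = f univ}) := by
    ext x
    simp only [Set.mem_inter_iff, Set.mem_iInter]
    exact ⟨fun h => ⟨⟨h.nonneg, h.le_one⟩, h.sum_le, h.sum_univ⟩,
      fun ⟨⟨h0, h1⟩, hle, huniv⟩ => ⟨h0, h1, hle, huniv⟩⟩
  rw [heq]
  refine isCompact_Icc.inter_right ((isClosed_iInter fun A => ?_).inter ?_)
  · exact isClosed_le (by fun_prop) (by fun_prop)
  · exact isClosed_eq (by fun_prop) (by fun_prop)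

open Topology in
theorem IsFractionalBase.eventually_add_smul (hx : IsFractionalBase f x) {d : E → ℝ}
    (hsupp : ∀ e ∉ fractionalSupport x, d e = 0)
    (htight : ∀ A, IsTight f x A → ∑ e ∈ A, d e = 0) :
    ∀ᶠ t in 𝓝 (0 : ℝ), IsFractionalBase f (x + t • d) := by
  have hzero : ∀ e, x e ∈ (Int.castRingHom ℝ).range → d e = 0 := fun e he =>
    hsupp e (notMem_fractionalSupport.2 he)
  have hnonneg : ∀ᶠ t in 𝓝 (0 : ℝ), ∀ e, -x e + t * -d e ≤ 0 :=
    Filter.eventually_all.2 fun e => eventually_add_mul_le (neg_nonpos.2 (hx.nonneg e)) fun h =>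
      neg_eq_zero.2 (hzero e (neg_eq_zero.1 h ▸ zero_mem _))
  have hle_one : ∀ᶠ t in 𝓝 (0 : ℝ), ∀ e, x e + t * d e ≤ 1 :=
    Filter.eventually_all.2 fun e => eventually_add_mul_le (hx.le_one e) fun h =>
      hzero e (h ▸ one_mem _)
  have hsum_le : ∀ᶠ t in 𝓝 (0 : ℝ), ∀ A : Finset E, ∑ e ∈ A, x e + t * ∑ e ∈ A, d e ≤ f A :=
    Filter.eventually_all.2 fun A => eventually_add_mul_le (hx.sum_le A) (htight A)
  filter_upwards [hnonneg, hle_one, hsum_le] with t h0 h1 hle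
  refine ⟨fun e => ?_, h1, fun A => ?_, ?_⟩
  · simp only [Pi.add_apply, Pi.smul_apply, smul_eq_mul]
    linarith [h0 e]
  · exact (sum_add_smul x d t A).trans_le (hle A)
  · rw [sum_add_smul, htight univ hx.sum_univ, mul_zero, add_zero, hx.sum_univ]

theorem IsFractionalBase.exists_extremePoint_of_face (hx : IsFractionalBase f x)
    (𝒮 : Finset (Finset E)) :
    ∃ z, IsFractionalBase f z ∧ (∀ A ∈ 𝒮, ∑ e ∈ A, z e = ∑ e ∈ A, x e) ∧
      (∀ e ∉ fractionalSupport x, z e = x e) ∧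
      ∀ d : E → ℝ, (∀ e ∉ fractionalSupport z, d e = 0) →
        (∀ A, IsTight f z A → ∑ e ∈ A, d e = 0) → (∀ A ∈ 𝒮, ∑ e ∈ A, d e = 0) → d = 0 := by
  let face : Set (E → ℝ) := {z | IsFractionalBase f z} ∩
    ((⋂ A ∈ 𝒮, {z | ∑ e ∈ A, z e = ∑ e ∈ A, x e}) ∩
      ⋂ e ∉ fractionalSupport x, {z | z e = x e})
  have hface {z : E → ℝ} : z ∈ face ↔ IsFractionalBase f z ∧
      (∀ A ∈ 𝒮, ∑ e ∈ A, z e = ∑ e ∈ A, x e) ∧ ∀ e ∉ fractionalSupport x, z e = x e := by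
    simp only [face, Set.mem_inter_iff, Set.mem_iInter, Set.mem_ofPred_eq]
  have hcompact : IsCompact face := isCompact_setOf_isFractionalBase.inter_right <|
    (isClosed_biInter fun A _ => isClosed_eq (by fun_prop) (by fun_prop)).inter <|
      isClosed_biInter fun e _ => isClosed_eq (by fun_prop) (by fun_prop)
  obtain ⟨z, hz⟩ := hcompact.extremePoints_nonempty ⟨x, hface.2 ⟨hx, by simp, by simp⟩⟩
  obtain ⟨hbase, hsums, hoff⟩ := hface.1 hz.1
  refine ⟨z, hbase, hsums, hoff, fun d hsupp htight hd => eq_zero_of_mem_extremePoints hz ?_⟩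
  filter_upwards [hbase.eventually_add_smul hsupp htight] with t ht
  refine hface.2 ⟨ht, fun A hA => ?_, fun e he => ?_⟩
  · rw [sum_add_smul, hd A hA, mul_zero, add_zero, hsums A hA]
  · have hez : e ∉ fractionalSupport z := fun h => he (fractionalSupport_subset_of_eq_off hoff h)
    simp [hsupp e hez, hoff e he]

end FractionalBase

section Submodular

variable {E : Type*} [DecidableEq E] {f : Finset E → ℝ} {x : E → ℝ}

/-- A submodular set function with value `0` at the empty set, such as a matroid rank function. -/
structure IsSubmodular (f : Finset E → ℝ) : Prop where
  empty : f ∅ = 0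
  union_add_inter_le : ∀ A B, f (A ∪ B) + f (A ∩ B) ≤ f A + f B

theorem IsSubmodular.const_mul {f : Finset E → ℝ} (hf : IsSubmodular f) {c : ℝ} (hc : 0 ≤ c) :
    IsSubmodular fun A => c * f A where
  empty := by rw [hf.empty, mul_zero]
  union_add_inter_le A B := by
    simpa only [mul_add] using mul_le_mul_of_nonneg_left (hf.union_add_inter_le A B) hc

theorem IsSubmodular.isTight_union_inter (hf : IsSubmodular f)
    (hle : ∀ A : Finset E, ∑ e ∈ A, x e ≤ f A) {A B : Finset E} (hA : IsTight f x A)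
    (hB : IsTight f x B) : IsTight f x (A ∪ B) ∧ IsTight f x (A ∩ B) := by
  have hunion := hle (A ∪ B)
  have hinter := hle (A ∩ B)
  have hsum := sum_union_inter (s₁ := A) (s₂ := B) (f := x)
  have hsub := hf.union_add_inter_le A B
  unfold IsTight at *
  constructor <;> linarith

theorem IsSubmodular.isTight_sup (hf : IsSubmodular f) (hle : ∀ A : Finset E, ∑ e ∈ A, x e ≤ f A)
    {ι : Type*} {s : Finset ι} {g : ι → Finset E} (hg : ∀ i ∈ s, IsTight f x (g i)) :
    IsTight f x (s.sup g) :=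
  sup_induction (by simp [IsTight, hf.empty])
    (fun _ hA _ hB => (hf.isTight_union_inter hle hA hB).1) hg

variable [Fintype E]

theorem IsFractionalBase.isTight_inf (hf : IsSubmodular f) (hx : IsFractionalBase f x)
    {ι : Type*} {s : Finset ι} {g : ι → Finset E} (hg : ∀ i ∈ s, IsTight f x (g i)) :
    IsTight f x (s.inf g) :=
  inf_induction hx.sum_univ (fun _ hA _ hB => (hf.isTight_union_inter hx.sum_le hA hB).2) hg

theorem IsTight.sum_image_tightAtom {A : Finset E} (hA : IsTight f x A) (d : E → ℝ) :
    ∑ C ∈ A.image (tightAtom f x), ∑ e ∈ C, d e = ∑ e ∈ A, d e := by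
  rw [← sum_fiberwise_of_maps_to (g := tightAtom f x) (t := A.image (tightAtom f x))
    fun e he => mem_image_of_mem _ he]
  refine sum_congr rfl (forall_mem_image.2 fun a ha => sum_congr ?_ fun _ _ => rfl)
  ext b
  simp only [mem_filter, tightAtom_eq_iff, iff_and_self]
  exact fun hb => (mem_tightAtom.1 hb A hA).1 ha

theorem IsFractionalBase.exists_least_isTight (hf : IsSubmodular f) (hx : IsFractionalBase f x)
    (e : E) : ∃ D, IsTight f x D ∧ e ∈ D ∧ ∀ A, IsTight f x A → e ∈ A → D ⊆ A := by
  classical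
  let 𝒯 : Finset (Finset E) := {A | IsTight f x A ∧ e ∈ A}
  have h𝒯 {A} : A ∈ 𝒯 ↔ IsTight f x A ∧ e ∈ A := mem_filter_univ A
  exact ⟨𝒯.inf id, hx.isTight_inf hf fun A hA => (h𝒯.1 hA).1,
    mem_inf.2 fun A hA => (h𝒯.1 hA).2, fun A hA heA => inf_le (f := id) (h𝒯.2 ⟨hA, heA⟩)⟩

/- If `D` is the least tight set containing `e`, then `D` without the atom of `e` is the union of
the least tight sets of its elements, hence itself tight. -/
theorem IsFractionalBase.exists_sum_tightAtom_eq_sub (hf : IsSubmodular f)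
    (hx : IsFractionalBase f x) (e : E) :
    ∃ D R, ∑ a ∈ tightAtom f x e, x a = f D - f R := by
  choose D hD hself hleast using fun e => hx.exists_least_isTight hf e
  have hatom : tightAtom f x e ⊆ D e := fun a ha => (mem_tightAtom.1 ha _ (hD e)).1 (hself e)
  have hrest : D e \ tightAtom f x e = (D e \ tightAtom f x e).sup D := by
    refine Subset.antisymm (fun a ha => mem_sup.2 ⟨a, ha, hself a⟩) fun a ha => ?_
    obtain ⟨b, hb, hab⟩ := mem_sup.1 ha
    obtain ⟨hbD, hbe⟩ := mem_sdiff.1 hb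
    refine mem_sdiff.2 ⟨hleast b _ (hD e) hbD hab, fun hae => hbe (mem_tightAtom.2 fun A hA => ?_)⟩
    have heb : e ∈ D b := (mem_tightAtom.1 hae _ (hD b)).2 hab
    exact ⟨fun he => hleast e A hA he hbD, fun hb => hleast b A hA hb heb⟩
  have htight : IsTight f x (D e \ tightAtom f x e) :=
    hrest ▸ hf.isTight_sup hx.sum_le fun a _ => hD a
  refine ⟨D e, D e \ tightAtom f x e, ?_⟩
  rw [← hD e, ← htight, ← sum_sdiff hatom, add_sub_cancel_left]

theorem IsFractionalBase.two_mul_card_image_tightAtom_le (hf : IsSubmodular f)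
    (hint : ∀ A, f A ∈ (Int.castRingHom ℝ).range) (hx : IsFractionalBase f x) :
    2 * #((fractionalSupport x).image (tightAtom f x)) ≤ #(fractionalSupport x) := by
  refine two_mul_card_image_le fun e he => ?_
  obtain ⟨D, R, hDR⟩ := hx.exists_sum_tightAtom_eq_sub hf e
  obtain ⟨e', he'e, hne, he'⟩ := exists_ne_mem_fractionalSupport
    (hDR ▸ sub_mem (hint D) (hint R)) (mem_tightAtom_self e) he
  exact ⟨e', he', hne, tightAtom_eq_iff.2 he'e⟩

theorem IsFractionalBase.exists_vertex_of_face (hx : IsFractionalBase f x)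
    (𝒮 : Finset (Finset E)) :
    ∃ z, IsFractionalBase f z ∧ (∀ A ∈ 𝒮, ∑ e ∈ A, z e = ∑ e ∈ A, x e) ∧
      (∀ e ∉ fractionalSupport x, z e = x e) ∧
      ∀ d : E → ℝ, (∀ e ∉ fractionalSupport z, d e = 0) →
        (∀ C ∈ (fractionalSupport z).image (tightAtom f z), ∑ e ∈ C, d e = 0) →
        (∀ A ∈ 𝒮, ∑ e ∈ A, d e = 0) → d = 0 := by
  obtain ⟨z, hz, hsums, hoff, hextreme⟩ := hx.exists_extremePoint_of_face 𝒮
  refine ⟨z, hz, hsums, hoff, fun d hsupp hatom hd => hextreme d hsupp (fun A hA => ?_) hd⟩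
  rw [← hA.sum_image_tightAtom]
  refine sum_eq_zero (forall_mem_image.2 fun e _ => ?_)
  refine sum_eq_zero_of_forall_mem hsupp fun a hae ha => ?_
  exact hatom _ (mem_image.2 ⟨a, ha, tightAtom_eq_iff.2 hae⟩)

/- Iterated rounding: at a vertex with `F` fractional coordinates, at most `#F / 2` of the
independent tight constraints come from `f`, so at least `#F / 2` come from `W`; double counting
then yields a `v ∈ W` whose constraint can be dropped because `δ v` has few fractional elements. -/
theorem IsFractionalBase.exists_integral_sum_le_add (hf : IsSubmodular f)
    (hint : ∀ A, f A ∈ (Int.castRingHom ℝ).range) (hx : IsFractionalBase f x) {I : Type*}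
    {δ : I → Finset E} {r : ℕ} {W : Finset I} (hr : ∀ e, #{v ∈ W | e ∈ δ v} ≤ r) :
    ∃ y, IsFractionalBase f y ∧ fractionalSupport y = ∅ ∧
      (∀ e ∉ fractionalSupport x, y e = x e) ∧
      ∀ v ∈ W, ∑ e ∈ δ v, y e ≤ ∑ e ∈ δ v, x e + (2 * r : ℕ) := by
  classical
  induction W using Finset.strongInduction generalizing x with
  | H W ih =>
  obtain ⟨z, hz, hsums, hoff, hvertex⟩ := hx.exists_vertex_of_face (W.image δ)
  replace hsums := forall_mem_image.1 hsums
  rcases (fractionalSupport z).eq_empty_or_nonempty with hF | hF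
  · refine ⟨z, hz, hF, hoff, fun v hv => ?_⟩
    rw [hsums hv]
    exact le_add_of_nonneg_right (Nat.cast_nonneg _)
  have hcard : #(fractionalSupport z) ≤
      #((fractionalSupport z).image (tightAtom f z)) + #W := by
    refine (card_le_card_of_sums_injective fun d hd hsum => ?_).trans
      ((card_union_le _ (W.image δ)).trans (by gcongr; exact card_image_le))
    exact hvertex d hd (fun C hC => hsum C (mem_union_left _ hC))
      fun A hA => hsum A (mem_union_right _ hA)
  have hhalf := hz.two_mul_card_image_tightAtom_le hf hint
  obtain ⟨v, hv, hfew⟩ := exists_card_inter_le (fun e _ => hr e) (by omega) hF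
  obtain ⟨y, hy, hyint, hyz, hyW⟩ := ih (W.erase v) (erase_ssubset hv) hz
    fun e => (card_le_card (filter_subset_filter _ (erase_subset v W))).trans (hr e)
  refine ⟨y, hy, hyint, fun e he => ?_, fun u hu => ?_⟩
  · rw [hyz e fun h => he (fractionalSupport_subset_of_eq_off hoff h), hoff e he]
  rw [← hsums hu]
  rcases eq_or_ne u v with rfl | huv
  · refine (sum_le_sum_add_card_inter hy.le_one hz.nonneg hyz (δ u)).trans ?_
    gcongr
  · exact hyW u (mem_erase.2 ⟨huv, hu⟩)

theorem IsFractionalBase.sum_tightAtom_eq_zero (hx : IsFractionalBase f x) {d : E → ℝ}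
    (hsupp : ∀ e ∉ fractionalSupport x, d e = 0) (htotal : ∑ e, d e = 0) {e : E}
    (h : ∀ C ∈ (fractionalSupport x).image (tightAtom f x), C ≠ tightAtom f x e →
      ∑ a ∈ C, d a = 0) : ∑ a ∈ tightAtom f x e, d a = 0 := by
  have huniv : IsTight f x univ := hx.sum_univ
  rw [← huniv.sum_image_tightAtom] at htotal
  rw [← htotal, sum_eq_single_of_mem _ (mem_image_of_mem (tightAtom f x) (mem_univ e))]
  refine forall_mem_image.2 fun b _ hne => sum_eq_zero_of_forall_mem hsupp fun a hab ha => ?_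
  exact h _ (mem_image.2 ⟨a, ha, tightAtom_eq_iff.2 hab⟩) hne

/- Otherwise the atoms and the fibres would each contribute at most half of the constraints
determining the fractional coordinates. Both families sum to the total, so one atom is redundant. -/
theorem IsFractionalBase.fractionalSupport_eq_empty (hf : IsSubmodular f)
    (hint : ∀ A, f A ∈ (Int.castRingHom ℝ).range) (hx : IsFractionalBase f x) {P : Type*}
    [DecidableEq P] {p : E → P}
    (hfib : ∀ q, ∑ e with p e = q, x e ∈ (Int.castRingHom ℝ).range)
    (hvertex : ∀ d : E → ℝ, (∀ e ∉ fractionalSupport x, d e = 0) →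
      (∀ C ∈ (fractionalSupport x).image (tightAtom f x), ∑ e ∈ C, d e = 0) →
      (∀ q, ∑ e with p e = q, d e = 0) → d = 0) :
    fractionalSupport x = ∅ := by
  set F := fractionalSupport x
  by_contra! hF
  obtain ⟨e₀, he₀⟩ := hF
  let atoms := F.image (tightAtom f x)
  let fibers : Finset (Finset E) := F.image fun e => univ.filter (p · = p e)
  have hcard : #F ≤ #(atoms.erase (tightAtom f x e₀)) + #fibers := by
    refine (card_le_card_of_sums_injective fun d hd hsum => ?_).trans (card_union_le _ _)
    have hfiber (q : P) : ∑ e with p e = q, d e = 0 := by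
      refine sum_eq_zero_of_forall_mem hd fun a haq ha => ?_
      obtain rfl : p a = q := (mem_filter_univ a).1 haq
      exact hsum _ (mem_union_right _ (mem_image_of_mem (fun e => univ.filter (p · = p e)) ha))
    have hatom : ∀ C ∈ atoms, C ≠ tightAtom f x e₀ → ∑ e ∈ C, d e = 0 := fun C hC hne =>
      hsum C (mem_union_left _ (mem_erase.2 ⟨hne, hC⟩))
    have htotal : ∑ e, d e = 0 := by
      rw [← sum_fiberwise_of_maps_to (g := p) (t := univ.image p) (by simp)]
      exact sum_eq_zero fun q _ => hfiber q
    refine hvertex d hd (fun C hC => ?_) hfiber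
    rcases eq_or_ne C (tightAtom f x e₀) with rfl | hne
    · exact hx.sum_tightAtom_eq_zero hd htotal hatom
    · exact hatom C hC hne
  have hatoms : 2 * #atoms ≤ #F := hx.two_mul_card_image_tightAtom_le hf hint
  have hfibers : 2 * #fibers ≤ #F := two_mul_card_image_le fun e he => by
    obtain ⟨e', he', hne, hF⟩ :=
      exists_ne_mem_fractionalSupport (hfib (p e)) ((mem_filter_univ e).2 rfl) he
    exact ⟨e', hF, hne, by rw [(mem_filter_univ e').1 he']⟩
  have herase : #(atoms.erase (tightAtom f x e₀)) < #atoms :=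
    card_erase_lt_of_mem (mem_image_of_mem _ he₀)
  omega

theorem IsFractionalBase.exists_integral_sum_fiber_eq (hf : IsSubmodular f)
    (hint : ∀ A, f A ∈ (Int.castRingHom ℝ).range) (hx : IsFractionalBase f x) {P : Type*}
    [DecidableEq P] [Finite P] (p : E → P)
    (hfib : ∀ q, ∑ e with p e = q, x e ∈ (Int.castRingHom ℝ).range) :
    ∃ y, IsFractionalBase f y ∧ fractionalSupport y = ∅ ∧
      ∀ q, ∑ e with p e = q, y e = ∑ e with p e = q, x e := by
  cases nonempty_fintype P
  obtain ⟨z, hz, hsums, -, hvertex⟩ :=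
    hx.exists_vertex_of_face (univ.image fun q => univ.filter (p · = q))
  have hfiber (q : P) : ∑ e with p e = q, z e = ∑ e with p e = q, x e :=
    hsums _ (mem_image_of_mem _ (mem_univ q))
  refine ⟨z, hz, hz.fractionalSupport_eq_empty hf hint (fun q => hfiber q ▸ hfib q) ?_, hfiber⟩
  exact fun d hd hatom hzero => hvertex d hd hatom (forall_mem_image.2 fun q _ => hzero q)

end Submodular

section Capacity

variable {E : Type*} {f : Finset E → ℝ} {a : ℝ}

open Topology

theorem eventually_sum_add_smul_single_le [Finite E] [DecidableEq E] {x : E → ℝ}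
    (hle : ∀ A : Finset E, ∑ e ∈ A, x e ≤ f A) {e : E} (he : ∀ A, IsTight f x A → e ∉ A) :
    ∀ᶠ t in 𝓝 (0 : ℝ), ∀ A : Finset E,
      ∑ e' ∈ A, (x + t • (Pi.single e 1 : E → ℝ)) e' ≤ f A := by
  refine Filter.eventually_all.2 fun A => ?_
  simp only [sum_add_smul, sum_pi_single']
  exact eventually_add_mul_le (hle A) fun hA => if_neg (he A hA)

theorem exists_le_forall_lt_mem_isTight [Finite E] (hnonneg : ∀ A, 0 ≤ f A) (ha : 0 ≤ a) :
    ∃ x : E → ℝ, (∀ e, 0 ≤ x e) ∧ (∀ e, x e ≤ a) ∧ (∀ A : Finset E, ∑ e ∈ A, x e ≤ f A) ∧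
      ∀ e, x e < a → ∃ A, IsTight f x A ∧ e ∈ A := by
  classical
  cases nonempty_fintype E
  let P : Set (E → ℝ) := Set.Icc 0 (fun _ => a) ∩ ⋂ A : Finset E, {x | ∑ e ∈ A, x e ≤ f A}
  have hP {x : E → ℝ} : x ∈ P ↔ ((∀ e, 0 ≤ x e) ∧ ∀ e, x e ≤ a) ∧
      ∀ A : Finset E, ∑ e ∈ A, x e ≤ f A := by
    simp only [P, Set.mem_inter_iff, Set.mem_iInter, Set.mem_ofPred_eq]
    rfl
  have hcompact : IsCompact P := isCompact_Icc.inter_right <|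
    isClosed_iInter fun A => isClosed_le (by fun_prop) (by fun_prop)
  obtain ⟨x, hx, hmax⟩ := hcompact.exists_isMaxOn (f := fun x => ∑ e, x e)
    ⟨0, hP.2 ⟨⟨fun _ => le_rfl, fun _ => ha⟩, by simpa using hnonneg⟩⟩ (by fun_prop)
  obtain ⟨⟨h0, hxa⟩, hle⟩ := hP.1 hx
  refine ⟨x, h0, hxa, hle, fun e he => ?_⟩
  by_contra! hloose
  let d : E → ℝ := Pi.single e 1
  have hd : 0 ≤ d := Pi.single_nonneg.2 zero_le_one
  have hcap : ∀ᶠ t in 𝓝 (0 : ℝ), ∀ e', x e' + t * d e' ≤ a :=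
    Filter.eventually_all.2 fun e' => eventually_add_mul_le (hxa e') fun h =>
      Pi.single_eq_of_ne (by rintro rfl; exact he.ne h) 1
  have hsum := eventually_sum_add_smul_single_le hle hloose
  obtain ⟨t, ⟨htcap, htsum⟩, ht⟩ :=
    (((hcap.and hsum).filter_mono nhdsWithin_le_nhds).and
      (self_mem_nhdsWithin (s := Set.Ioi 0))).exists
  have hmem : x + t • d ∈ P := by
    refine hP.2 ⟨⟨fun e' => ?_, htcap⟩, htsum⟩
    exact add_nonneg (h0 e') (mul_nonneg ht.le (hd e'))
  have hincrease := hmax hmem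
  simp only [Set.mem_ofPred_eq, sum_add_smul, d, sum_pi_single', mem_univ, if_true] at hincrease
  linarith

theorem IsSubmodular.exists_isFractionalBase_le [Fintype E] [DecidableEq E] (hf : IsSubmodular f)
    (hnonneg : ∀ A, 0 ≤ f A) (ha : 0 ≤ a) (ha1 : a ≤ 1)
    (hcap : ∀ A, f univ ≤ f A + a * #Aᶜ) : ∃ x, IsFractionalBase f x ∧ ∀ e, x e ≤ a := by
  classical
  obtain ⟨x, h0, hxa, hle, htight⟩ := exists_le_forall_lt_mem_isTight hnonneg ha
  let T : Finset E := (univ.filter (IsTight f x)).sup id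
  have hT : IsTight f x T := hf.isTight_sup hle fun A hA => (mem_filter_univ A).1 hA
  have hsat : ∀ e ∈ Tᶜ, x e = a := fun e he => (hxa e).eq_of_not_lt fun hlt => by
    obtain ⟨A, hA, heA⟩ := htight e hlt
    exact mem_compl.1 he (mem_sup.2 ⟨A, (mem_filter_univ A).2 hA, heA⟩)
  refine ⟨x, ⟨h0, fun e => (hxa e).trans ha1, hle, (hle univ).antisymm ?_⟩, hxa⟩
  calc f univ ≤ f T + a * #Tᶜ := hcap T
    _ = ∑ e ∈ T, x e + ∑ e ∈ Tᶜ, x e := by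
        rw [hT, sum_congr rfl hsat, sum_const, nsmul_eq_mul, mul_comm]
    _ = ∑ e, x e := sum_add_sum_compl T x

end Capacity

section IntegerDecomposition

variable {E κ : Type*}

/-- The elements of colour `i` in a set `A` of coloured elements. -/
noncomputable def colourSlice (A : Finset (E × κ)) (i : κ) : Finset E :=
  A.preimage (·, i) (Prod.mk_left_injective i).injOn

theorem mem_colourSlice {A : Finset (E × κ)} {i : κ} {e : E} :
    e ∈ colourSlice A i ↔ (e, i) ∈ A :=
  mem_preimage

theorem sum_sum_colourSlice [Fintype κ] (A : Finset (E × κ)) (z : E × κ → ℝ) :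
    ∑ i, ∑ e ∈ colourSlice A i, z (e, i) = ∑ c ∈ A, z c := by
  rw [sum_sigma']
  refine sum_nbij' (fun c => (c.2, c.1)) (fun c => ⟨c.2, c.1⟩) ?_ ?_ ?_ ?_ ?_ <;>
    simp [mem_colourSlice]

theorem colourSlice_product_singleton [DecidableEq κ] (A : Finset E) (i j : κ) :
    colourSlice (A ×ˢ {i}) j = if j = i then A else ∅ := by
  ext e
  split_ifs <;> simp_all [mem_colourSlice, eq_comm]

theorem colourSlice_univ [Fintype E] [Fintype κ] (i : κ) :
    colourSlice (univ : Finset (E × κ)) i = univ := by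
  ext e
  simp [mem_colourSlice]

variable [Fintype κ] {f : Finset E → ℝ}

theorem IsSubmodular.sum_colourSlice [DecidableEq E] [DecidableEq κ] (hf : IsSubmodular f) :
    IsSubmodular fun A : Finset (E × κ) => ∑ i, f (colourSlice A i) where
  empty := sum_eq_zero fun i _ => by
    rw [show colourSlice (∅ : Finset (E × κ)) i = ∅ by ext; simp [mem_colourSlice], hf.empty]
  union_add_inter_le A B := by
    rw [← sum_add_distrib, ← sum_add_distrib]
    refine sum_le_sum fun i _ => ?_
    convert hf.union_add_inter_le (colourSlice A i) (colourSlice B i) using 3 <;>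
      ext <;> simp [mem_colourSlice]

variable [Fintype E]

theorem IsFractionalBase.colour (h0 : f ∅ = 0) {z : E × κ → ℝ}
    (hz : IsFractionalBase (fun A => ∑ i, f (colourSlice A i)) z) (i : κ) :
    IsFractionalBase f fun e => z (e, i) := by
  classical
  have hle (j : κ) (A : Finset E) : ∑ e ∈ A, z (e, j) ≤ f A := by
    calc ∑ e ∈ A, z (e, j) = ∑ c ∈ A ×ˢ {j}, z c := by rw [sum_product]; simp
      _ ≤ ∑ i, f (colourSlice (A ×ˢ {j}) i) := hz.sum_le _
      _ = f A := by
        simp only [colourSlice_product_singleton, apply_ite f, h0, sum_ite_eq', mem_univ, if_true]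
  refine ⟨fun e => hz.nonneg _, fun e => hz.le_one _, hle i, ?_⟩
  have huniv := hz.sum_univ
  rw [← sum_sum_colourSlice] at huniv
  simp only [colourSlice_univ] at huniv
  exact (sum_eq_sum_iff_of_le fun j _ => hle j univ).1 huniv i (mem_univ i)

theorem IsFractionalBase.uniformColouring [Nonempty κ] {y : E → ℝ}
    (hy : IsFractionalBase (fun A => Fintype.card κ * f A) y) :
    IsFractionalBase (fun A : Finset (E × κ) => ∑ i, f (colourSlice A i))
      fun c => y c.1 / Fintype.card κ := by
  have hpos : (0 : ℝ) < Fintype.card κ := Nat.cast_pos.2 Fintype.card_pos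
  have hone : (1 : ℝ) ≤ Fintype.card κ := Nat.one_le_cast.2 Fintype.card_pos
  refine ⟨fun c => div_nonneg (hy.nonneg _) hpos.le,
    fun c => (div_le_one hpos).2 ((hy.le_one _).trans hone), fun A => ?_, ?_⟩
  · rw [← sum_sum_colourSlice]
    refine sum_le_sum fun i _ => ?_
    rw [← sum_div, div_le_iff₀' hpos]
    exact hy.sum_le _
  · rw [← sum_sum_colourSlice]
    refine sum_congr rfl fun i _ => ?_
    rw [← sum_div, div_eq_iff hpos.ne', mul_comm, colourSlice_univ]
    exact hy.sum_univ

theorem IsFractionalBase.exists_integral_decomposition [DecidableEq E] [Nonempty κ]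
    (hf : IsSubmodular f)
    (hint : ∀ A, f A ∈ (Int.castRingHom ℝ).range) {y : E → ℝ}
    (hy : IsFractionalBase (fun A => Fintype.card κ * f A) y) (hyint : fractionalSupport y = ∅) :
    ∃ z : κ → E → ℝ, (∀ i, IsFractionalBase f (z i)) ∧ (∀ i, fractionalSupport (z i) = ∅) ∧
      ∀ e, ∑ i, z i e = y e := by
  classical
  have hsum (z : E × κ → ℝ) (e : E) : ∑ c with c.1 = e, z c = ∑ i, z (e, i) := by
    rw [sum_filter, Fintype.sum_prod_type, sum_eq_single e] <;> simp +contextual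
  have hfibre (e : E) : ∑ c : E × κ with c.1 = e, y c.1 / Fintype.card κ = y e := by
    simp only [hsum, sum_const, card_univ, nsmul_eq_mul]
    exact mul_div_cancel₀ _ (by simp)
  obtain ⟨z, hz, hzint, hzsum⟩ := hy.uniformColouring.exists_integral_sum_fiber_eq
    hf.sum_colourSlice (fun A => sum_mem fun i _ => hint _) Prod.fst fun e =>
      hfibre e ▸ notMem_fractionalSupport.1 (hyint ▸ notMem_empty e)
  refine ⟨fun i e => z (e, i), hz.colour hf.empty, fun i => ?_, fun e => ?_⟩
  · refine eq_empty_of_forall_notMem fun e => notMem_fractionalSupport.2 ?_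
    exact notMem_fractionalSupport.1 (hzint ▸ notMem_empty (e, i))
  · rw [← hsum, hzsum, hfibre]

end IntegerDecomposition

section EdgeRank

variable {V : Type*}

/-- The space of functions that are constant along the edges of `H`. Its dimension is the number of
connected components, which turns the rank inequality for graphs into the dimension formula. -/
def edgeInvariantFunctions (H : SimpleGraph V) : Submodule ℝ (V → ℝ) where
  carrier := {φ | ∀ u v, H.Adj u v → φ u = φ v}
  add_mem' hφ hψ u v huv := congr_arg₂ (· + ·) (hφ u v huv) (hψ u v huv)
  zero_mem' _ _ _ := rfl
  smul_mem' c _ hφ u v huv := congr_arg (c • ·) (hφ u v huv)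

theorem mem_edgeInvariantFunctions {H : SimpleGraph V} {φ : V → ℝ} :
    φ ∈ edgeInvariantFunctions H ↔ ∀ u v, H.Adj u v → φ u = φ v :=
  Iff.rfl

theorem finrank_edgeInvariantFunctions [Finite V] (H : SimpleGraph V) :
    Module.finrank ℝ (edgeInvariantFunctions H) = Nat.card H.ConnectedComponent := by
  classical
  cases nonempty_fintype V
  have hker : edgeInvariantFunctions H = (H.lapMatrix ℝ).toLin'.ker := by
    ext φ
    rw [LinearMap.mem_ker, Matrix.toLin'_apply, H.lapMatrix_mulVec_eq_zero_iff_forall_adj,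
      mem_edgeInvariantFunctions]
  rw [Nat.card_eq_fintype_card, H.card_connectedComponent_eq_finrank_ker_toLin'_lapMatrix, hker]

theorem card_connectedComponent_add_le [Finite V] (H₁ H₂ : SimpleGraph V) :
    Nat.card H₁.ConnectedComponent + Nat.card H₂.ConnectedComponent ≤
      Nat.card (H₁ ⊔ H₂).ConnectedComponent + Nat.card (H₁ ⊓ H₂).ConnectedComponent := by
  have hsup : edgeInvariantFunctions H₁ ⊓ edgeInvariantFunctions H₂ =
      edgeInvariantFunctions (H₁ ⊔ H₂) := by
    ext φ
    simp only [Submodule.mem_inf, mem_edgeInvariantFunctions, SimpleGraph.sup_adj, or_imp,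
      forall_and]
  have hinf : edgeInvariantFunctions H₁ ⊔ edgeInvariantFunctions H₂ ≤
      edgeInvariantFunctions (H₁ ⊓ H₂) :=
    sup_le (fun φ hφ u v huv => hφ u v huv.1) fun φ hφ u v huv => hφ u v huv.2
  simp only [← finrank_edgeInvariantFunctions]
  rw [← Submodule.finrank_sup_add_finrank_inf_eq, hsup, add_comm]
  exact Nat.add_le_add_left (Submodule.finrank_mono hinf) _

/-- The rank of a set `A` of unordered pairs in the graphic matroid of `G`, where loops and
non-edges of `G` are given rank zero. It is real-valued so as to be a submodular function in the
sense of `IsSubmodular`. -/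
noncomputable def edgeRank (G : SimpleGraph V) (A : Finset (Sym2 V)) : ℝ :=
  Nat.card V - Nat.card (G ⊓ SimpleGraph.fromEdgeSet (A : Set (Sym2 V))).ConnectedComponent

variable (G : SimpleGraph V)

theorem edgeRank_mem_range_intCast (A : Finset (Sym2 V)) :
    edgeRank G A ∈ (Int.castRingHom ℝ).range :=
  sub_mem (natCast_mem _ _) (natCast_mem _ _)

theorem edgeRank_nonneg [Finite V] (A : Finset (Sym2 V)) : 0 ≤ edgeRank G A :=
  sub_nonneg.2 (Nat.cast_le.2 (Nat.card_le_card_of_surjective _ Quot.mk_surjective))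

theorem isSubmodular_edgeRank [Finite V] [DecidableEq V] : IsSubmodular (edgeRank G) where
  empty := by
    have hinj : Function.Injective (⊥ : SimpleGraph V).connectedComponentMk := fun u v huv => by
      simpa using huv
    have hcard := Nat.card_eq_of_bijective _ ⟨hinj, Quot.mk_surjective⟩
    simp [edgeRank, ← hcard]
  union_add_inter_le A B := by
    have hcard : ((_ : ℕ) : ℝ) ≤ (_ : ℕ) := Nat.cast_le.2 <|
      card_connectedComponent_add_le (G ⊓ .fromEdgeSet (A : Set (Sym2 V)))
        (G ⊓ .fromEdgeSet (B : Set (Sym2 V)))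
    rw [← inf_sup_left, ← inf_inf_distrib_left, ← SimpleGraph.fromEdgeSet_union,
      ← SimpleGraph.fromEdgeSet_inter] at hcard
    push_cast at hcard
    simp only [edgeRank, coe_union, coe_inter]
    linarith

theorem edgeRank_univ [Fintype V] :
    edgeRank G univ = Nat.card V - Nat.card G.ConnectedComponent := by
  simp [edgeRank]

theorem card_connectedComponent_eq_one (hG : G.Connected) : Nat.card G.ConnectedComponent = 1 := by
  have := hG.nonempty
  exact Nat.card_eq_one_iff_unique.2
    ⟨hG.preconnected.subsingleton_connectedComponent, inferInstance⟩

theorem connected_of_card_connectedComponent_le_one [Finite V] [Nonempty V]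
    (h : Nat.card G.ConnectedComponent ≤ 1) : G.Connected := by
  have := Finite.card_le_one_iff_subsingleton.1 h
  exact ⟨fun u v => SimpleGraph.ConnectedComponent.exact (Subsingleton.elim _ _)⟩

end EdgeRank

section EdgeCuts

variable {V : Type*} [Fintype V] {G : SimpleGraph V} {K : ℕ}

theorem le_card_boundary_darts [DecidableRel G.Adj] (hG : G.IsEdgeConnected K) {S : Set V}
    [DecidablePred (· ∈ S)] {u v : V} (hu : u ∈ S) (hv : v ∉ S) :
    K ≤ #{d : G.Dart | d.fst ∈ S ∧ d.snd ∉ S} := by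
  classical
  by_contra! hlt
  let s : Finset (Sym2 V) := image SimpleGraph.Dart.edge {d : G.Dart | d.fst ∈ S ∧ d.snd ∉ S}
  have hs : (s : Set (Sym2 V)).encard < K := by
    rw [Set.encard_coe_eq_coe_finsetCard]
    exact_mod_cast card_image_le.trans_lt hlt
  obtain ⟨w⟩ := hG u v hs
  obtain ⟨d, -, hfst, hsnd⟩ := w.exists_boundary_dart S hu hv
  obtain ⟨hadj, hds⟩ := SimpleGraph.deleteEdges_adj.1 d.adj
  exact hds (mem_coe.2 (mem_image.2 ⟨⟨d.toProd, hadj⟩, by simp [hfst, hsnd], rfl⟩))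

theorem card_connectedComponent_mul_le [DecidableEq V] [DecidableRel G.Adj]
    (hG : G.IsEdgeConnected K) {H : SimpleGraph V} [DecidableRel H.Adj] (hH : ¬H.Preconnected) :
    Nat.card H.ConnectedComponent * K ≤ 2 * #(G.edgeFinset \ H.edgeFinset) := by
  classical
  let comp := H.connectedComponentMk
  let D : Finset G.Dart := {d | comp d.fst ≠ comp d.snd}
  have hcomponents : Nat.card H.ConnectedComponent * K ≤ #D := by
    rw [Nat.card_eq_fintype_card, card_eq_sum_card_fiberwise (f := fun d => comp d.fst)
      (t := univ) fun _ _ => mem_univ _]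
    refine card_nsmul_le_sum univ _ K fun C _ => ?_
    obtain ⟨u, hu⟩ := C.nonempty_supp
    obtain ⟨v, hv⟩ : ∃ v, v ∉ C.supp := by
      by_contra! hall
      exact hH fun a b => SimpleGraph.ConnectedComponent.exact ((hall a).trans (hall b).symm)
    refine (le_card_boundary_darts hG hu hv).trans (card_le_card fun d hd => ?_)
    obtain ⟨hfst, hsnd⟩ := (mem_filter_univ d).1 hd
    exact mem_filter.2 ⟨(mem_filter_univ d).2 fun h => hsnd (h.symm.trans hfst), hfst⟩
  have hedges : D.image SimpleGraph.Dart.edge ⊆ G.edgeFinset \ H.edgeFinset := by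
    refine image_subset_iff.2 fun d hd => ?_
    rw [mem_sdiff, SimpleGraph.mem_edgeFinset, SimpleGraph.mem_edgeFinset]
    refine ⟨d.edge_mem, fun h => (mem_filter_univ d).1 hd ?_⟩
    exact SimpleGraph.ConnectedComponent.sound (SimpleGraph.Adj.reachable h)
  refine hcomponents.trans ((card_le_mul_card_image D 2 fun e he => ?_).trans (by gcongr))
  have heG := SimpleGraph.mem_edgeFinset.1 (mem_sdiff.1 (hedges he)).1
  exact (card_le_card (filter_subset_filter _ (subset_univ D))).trans_eq
    (G.dart_edge_fiber_card e heG)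

theorem mul_edgeRank_univ_le [DecidableEq V] [Nonempty V] (hG : G.IsEdgeConnected K)
    (A : Finset (Sym2 V)) : K * edgeRank G univ ≤ K * edgeRank G A + 2 * #Aᶜ := by
  classical
  let H := G ⊓ SimpleGraph.fromEdgeSet (A : Set (Sym2 V))
  have hG1 : (1 : ℝ) ≤ Nat.card G.ConnectedComponent := Nat.one_le_cast.2 Nat.card_pos
  have hK : (0 : ℝ) ≤ K := K.cast_nonneg
  suffices h : K * (Nat.card H.ConnectedComponent : ℝ) ≤ K + 2 * #Aᶜ by
    rw [edgeRank_univ, edgeRank]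
    linarith [mul_le_mul_of_nonneg_left hG1 hK]
  by_cases hH : H.Preconnected
  · have := hH.subsingleton_connectedComponent
    have hH1 : (Nat.card H.ConnectedComponent : ℝ) ≤ 1 :=
      Nat.cast_le_one.2 (Finite.card_le_one_iff_subsingleton.2 this)
    linarith [mul_le_mul_of_nonneg_left hH1 hK, (#Aᶜ).cast_nonneg (α := ℝ)]
  · have hcut : Nat.card H.ConnectedComponent * K ≤ 2 * #Aᶜ := by
      refine (card_connectedComponent_mul_le hG hH).trans ?_
      gcongr
      intro e he
      simp only [H, mem_sdiff, SimpleGraph.mem_edgeFinset, SimpleGraph.edgeSet_inf,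
        SimpleGraph.edgeSet_fromEdgeSet] at he
      exact mem_compl.2 fun heA => he.2 ⟨he.1, heA, G.not_isDiag_of_mem_edgeSet he.1⟩
    have hcut' : (Nat.card H.ConnectedComponent * K : ℝ) ≤ 2 * #Aᶜ := mod_cast hcut
    linarith

theorem exists_isFractionalBase_const_mul_edgeRank [Nonempty V] (hG : G.IsEdgeConnected K)
    (hK : 0 < K) {k : ℕ} (hk : 2 * k ≤ K) :
    ∃ x, IsFractionalBase (fun A => k * edgeRank G A) x ∧ ∀ e, x e ≤ 2 * k / K := by
  classical
  have hK' : (0 : ℝ) < K := Nat.cast_pos.2 hK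
  refine ((isSubmodular_edgeRank G).const_mul k.cast_nonneg).exists_isFractionalBase_le
    (fun A => mul_nonneg k.cast_nonneg (edgeRank_nonneg G A)) (by positivity)
    ((div_le_one hK').2 (mod_cast hk)) fun A => ?_
  refine le_of_mul_le_mul_left ?_ hK'
  calc K * (k * edgeRank G univ) = k * (K * edgeRank G univ) := by ring
    _ ≤ k * (K * edgeRank G A + 2 * #Aᶜ) := by
      gcongr
      exact mul_edgeRank_univ_le hG A
    _ = K * (k * edgeRank G A + 2 * k / K * #Aᶜ) := by field_simp

end EdgeCuts

section SpanningTrees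

variable {V : Type*} {G : SimpleGraph V} {y : Sym2 V → ℝ}

/-- The subgraph of `G` formed by the edges at which `y` is nonzero. When `y` is an integral base of
`edgeRank G`, this is the spanning tree with indicator function `y`. -/
def supportGraph (G : SimpleGraph V) (y : Sym2 V → ℝ) : SimpleGraph V :=
  G ⊓ SimpleGraph.fromEdgeSet (Function.support y)

theorem mem_edgeSet_supportGraph {e : Sym2 V} :
    e ∈ (supportGraph G y).edgeSet ↔ e ∈ G.edgeSet ∧ y e ≠ 0 := by
  rw [supportGraph, SimpleGraph.edgeSet_inf, SimpleGraph.edgeSet_fromEdgeSet]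
  exact and_congr_right fun he => and_iff_left (G.not_isDiag_of_mem_edgeSet he)

theorem disjoint_edgeSet_supportGraph {z : Sym2 V → ℝ} (h : ∀ e, y e = 0 ∨ z e = 0) :
    Disjoint (supportGraph G y).edgeSet (supportGraph G z).edgeSet :=
  Set.disjoint_left.2 fun e hy hz =>
    (h e).elim (mem_edgeSet_supportGraph.1 hy).2 (mem_edgeSet_supportGraph.1 hz).2

variable [Fintype V]

theorem card_edgeSet_supportGraph [DecidableRel G.Adj] (hy : ∀ e, y e = 0 ∨ y e = 1) :
    (Nat.card (supportGraph G y).edgeSet : ℝ) = ∑ e ∈ G.edgeFinset, y e := by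
  classical
  have hedges : (supportGraph G y).edgeFinset = G.edgeFinset.filter (y · ≠ 0) := by
    ext e
    rw [mem_filter, SimpleGraph.mem_edgeFinset, SimpleGraph.mem_edgeFinset,
      mem_edgeSet_supportGraph]
  rw [sum_eq_card_filter_ne_zero hy, ← hedges, Nat.card_eq_fintype_card,
    SimpleGraph.edgeFinset_card]

theorem card_neighborSet_supportGraph [DecidableEq V] [DecidableRel G.Adj]
    (hy : ∀ e, y e = 0 ∨ y e = 1) (v : V) :
    (Nat.card ((supportGraph G y).neighborSet v) : ℝ) = ∑ e ∈ G.incidenceFinset v, y e := by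
  classical
  have hincidence : (supportGraph G y).incidenceFinset v =
      (G.incidenceFinset v).filter (y · ≠ 0) := by
    ext e
    simp only [mem_filter, SimpleGraph.mem_incidenceFinset, SimpleGraph.incidenceSet,
      Set.mem_ofPred_eq, mem_edgeSet_supportGraph]
    tauto
  rw [sum_eq_card_filter_ne_zero hy, ← hincidence, SimpleGraph.card_incidenceFinset_eq_degree,
    Nat.card_eq_fintype_card, SimpleGraph.card_neighborSet_eq_degree]

theorem IsFractionalBase.connected_supportGraph (hG : G.Connected)
    (hy : IsFractionalBase (edgeRank G) y) : (supportGraph G y).Connected := by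
  classical
  have := hG.nonempty
  let B : Finset (Sym2 V) := {e | y e ≠ 0}
  have hrank : edgeRank G univ ≤ edgeRank G B := by
    rw [← hy.sum_univ, ← sum_filter_ne_zero]
    exact hy.sum_le B
  have hB : (B : Set (Sym2 V)) = Function.support y := by simp [B, Function.support]
  rw [edgeRank_univ, card_connectedComponent_eq_one G hG, edgeRank, hB, Nat.cast_one,
    sub_le_sub_iff_left, Nat.cast_le_one] at hrank
  exact connected_of_card_connectedComponent_le_one _ hrank

theorem IsFractionalBase.isTree_supportGraph (hG : G.Connected)
    (hy : IsFractionalBase (edgeRank G) y) (hyint : fractionalSupport y = ∅) :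
    (supportGraph G y).IsTree := by
  classical
  have hconn := hy.connected_supportGraph hG
  refine SimpleGraph.isTree_iff_connected_and_card.2
    ⟨hconn, le_antisymm ?_ hconn.card_vert_le_card_edgeSet_add_one⟩
  have hedges : (Nat.card (supportGraph G y).edgeSet : ℝ) ≤ Nat.card V - 1 :=
    calc (Nat.card (supportGraph G y).edgeSet : ℝ) = ∑ e ∈ G.edgeFinset, y e :=
          card_edgeSet_supportGraph (hy.eq_zero_or_one hyint)
      _ ≤ ∑ e, y e := sum_le_univ_sum_of_nonneg hy.nonneg
      _ = Nat.card V - 1 := by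
        rw [hy.sum_univ, edgeRank_univ, card_connectedComponent_eq_one G hG, Nat.cast_one]
  exact_mod_cast le_sub_iff_add_le.1 hedges

theorem exists_isTree_pairwise_disjoint_sum_eq [DecidableEq V] [DecidableRel G.Adj]
    {ι : Type*} [Fintype ι] [Nonempty ι] (hG : G.Connected)
    (hy : IsFractionalBase (fun A => Fintype.card ι * edgeRank G A) y)
    (hyint : fractionalSupport y = ∅) :
    ∃ T : ι → SimpleGraph V, (∀ i, T i ≤ G) ∧ (∀ i, (T i).IsTree) ∧
      (Pairwise fun i j => Disjoint (T i).edgeSet (T j).edgeSet) ∧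
      ∀ v, ∑ i, (Nat.card ((T i).neighborSet v) : ℝ) = ∑ e ∈ G.incidenceFinset v, y e := by
  obtain ⟨z, hz, hzint, hzy⟩ :=
    hy.exists_integral_decomposition (isSubmodular_edgeRank G) (edgeRank_mem_range_intCast G) hyint
  have h01 (i : ι) := (hz i).eq_zero_or_one (hzint i)
  refine ⟨fun i => supportGraph G (z i), fun i => inf_le_left,
    fun i => (hz i).isTree_supportGraph hG (hzint i), fun i j hij => ?_, fun v => ?_⟩
  · refine disjoint_edgeSet_supportGraph fun e => ?_
    have hpair : z i e + z j e ≤ 1 :=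
      (add_le_sum (fun l _ => (hz l).nonneg e) (mem_univ i) (mem_univ j) hij).trans
        ((hzy e).trans_le (hy.le_one e))
    by_contra! hne
    linarith [(h01 i e).resolve_left hne.1, (h01 j e).resolve_left hne.2]
  · simp only [card_neighborSet_supportGraph (h01 _)]
    rw [sum_comm]
    exact sum_congr rfl fun e _ => hzy e

theorem card_filter_mem_incidenceFinset_le [DecidableEq V] [DecidableRel G.Adj] (e : Sym2 V) :
    #{v | e ∈ G.incidenceFinset v} ≤ 2 := by
  have hends : ({v | e ∈ G.incidenceFinset v} : Finset V) ⊆ e.toFinset := fun v hv =>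
    Sym2.mem_toFinset.2 ((G.mem_incidenceFinset v e).1 ((mem_filter_univ v).1 hv)).2
  refine (card_le_card hends).trans ?_
  rw [Sym2.card_toFinset]
  split_ifs <;> norm_num

theorem exists_isTree_sum_card_neighborSet_le {V : Type*} [Finite V] [Nonempty V]
    {G : SimpleGraph V} {ι : Type*} [Fintype ι] [Nonempty ι] {K : ℕ} (hG : G.IsEdgeConnected K)
    (hK : 2 * Fintype.card ι ≤ K) :
    ∃ T : ι → SimpleGraph V, (∀ i, T i ≤ G) ∧ (∀ i, (T i).IsTree) ∧
      (Pairwise fun i j => Disjoint (T i).edgeSet (T j).edgeSet) ∧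
      ∀ v, ∑ i, (Nat.card ((T i).neighborSet v) : ℝ) ≤
        Nat.card (G.neighborSet v) * (2 * Fintype.card ι / K) + 4 := by
  classical
  cases nonempty_fintype V
  have hKpos : 0 < K := by linarith [Fintype.card_pos (α := ι)]
  obtain ⟨x, hx, hxle⟩ := exists_isFractionalBase_const_mul_edgeRank hG hKpos hK
  obtain ⟨y, hy, hyint, -, hyx⟩ := hx.exists_integral_sum_le_add
    ((isSubmodular_edgeRank G).const_mul (Fintype.card ι).cast_nonneg)
    (fun A => mul_mem (natCast_mem _ _) (edgeRank_mem_range_intCast G A)) (W := univ)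
    (card_filter_mem_incidenceFinset_le (G := G))
  obtain ⟨T, hle, htree, hdisj, hsum⟩ :=
    exists_isTree_pairwise_disjoint_sum_eq (hG.connected hKpos.ne') hy hyint
  refine ⟨T, hle, htree, hdisj, fun v => ?_⟩
  calc ∑ i, (Nat.card ((T i).neighborSet v) : ℝ) = ∑ e ∈ G.incidenceFinset v, y e := hsum v
    _ ≤ ∑ e ∈ G.incidenceFinset v, x e + 4 := mod_cast hyx v (mem_univ v)
    _ ≤ Nat.card (G.neighborSet v) * (2 * Fintype.card ι / K) + 4 := by
      gcongr
      refine (sum_le_card_nsmul _ _ _ fun e _ => hxle e).trans_eq ?_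
      rw [nsmul_eq_mul, SimpleGraph.card_incidenceFinset_eq_degree, Nat.card_eq_fintype_card,
        SimpleGraph.card_neighborSet_eq_degree]

end SpanningTrees

theorem SGEdgeConn.isEdgeConnected {V : Type} {G : SimpleGraph V} {k : ℕ} (hG : SGEdgeConn G k) :
    G.IsEdgeConnected k := by
  intro u v s hs
  have hsub : (s ∩ G.edgeSet).encard < k := (Set.encard_le_encard Set.inter_subset_left).trans_lt hs
  have hcard : Nat.card ↑(s ∩ G.edgeSet) < k := by
    rw [← (Set.finite_of_encard_le_coe hsub.le).cast_ncard_eq] at hsub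
    exact_mod_cast hsub
  have h := hG (s ∩ G.edgeSet) Set.inter_subset_right hcard
  rw [← SimpleGraph.deleteEdges_eq_inter_edgeSet] at h
  exact h.preconnected u v

theorem SGEdgeConn.nonempty {V : Type} {G : SimpleGraph V} {k : ℕ} (hG : SGEdgeConn G k)
    (hk : 0 < k) : Nonempty V :=
  (hG ∅ (Set.empty_subset _) (by simpa using hk)).nonempty

theorem four_mul_two_pow_le_mul_two_pow_ceil_logb {ε : ℝ} (hε : 0 < ε) (m : ℕ) :
    4 * 2 ^ m ≤ ε * 2 ^ (2 + m + ⌈Real.logb 2 (1 / ε)⌉₊) := by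
  have hceil : 1 / ε ≤ 2 ^ ⌈Real.logb 2 (1 / ε)⌉₊ := by
    rw [← Real.rpow_natCast, ← Real.logb_le_iff_le_rpow one_lt_two (one_div_pos.2 hε)]
    exact Nat.le_ceil _
  calc (4 * 2 ^ m : ℝ) ≤ 4 * 2 ^ m * (ε * 2 ^ ⌈Real.logb 2 (1 / ε)⌉₊) :=
        le_mul_of_one_le_right (by positivity) ((div_le_iff₀' hε).1 hceil)
    _ = ε * 2 ^ (2 + m + ⌈Real.logb 2 (1 / ε)⌉₊) := by ring

theorem stmt15_general {V ι : Type*} [Finite V] [Nonempty V] [Fintype ι] [Nonempty ι]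
    {G : SimpleGraph V} {ε : ℝ} {K : ℕ} (hG : G.IsEdgeConnected K) (hK : 2 * Fintype.card ι ≤ K)
    (hεK : 4 * Fintype.card ι ≤ ε * K) (hdeg : ∀ v, 8 ≤ ε * Nat.card (G.neighborSet v)) :
    ∃ T : ι → SimpleGraph V,
      (∀ i, T i ≤ G) ∧ (∀ i, (T i).IsTree) ∧
      (Pairwise fun i j => Disjoint ((T i).edgeSet) ((T j).edgeSet)) ∧
      ∀ v : V,
        (∑ i, (Nat.card ((T i).neighborSet v) : ℝ)) ≤
          ε * (Nat.card (G.neighborSet v) : ℝ) := by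
  obtain ⟨T, hle, htree, hdisj, hsum⟩ := exists_isTree_sum_card_neighborSet_le hG hK
  have hKpos : (0 : ℝ) < K := by
    exact_mod_cast (Nat.mul_pos two_pos Fintype.card_pos).trans_le hK
  have hratio : 2 * Fintype.card ι / K ≤ ε / 2 := by
    rw [div_le_div_iff₀ hKpos two_pos]
    linarith
  refine ⟨T, hle, htree, hdisj, fun v => (hsum v).trans ?_⟩
  linarith [mul_le_mul_of_nonneg_left hratio (Nat.card (G.neighborSet v)).cast_nonneg, hdeg v]

/-- for every `ε > 0` and `m ≥ 1` there is `L` such that every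
`2^n`-edge-connected graph with minimum degree at least `L`, where
`n = 2 + m + ⌈log₂(1/ε)⌉`, has `2^m` pairwise edge-disjoint spanning trees whose
total degree at each vertex is at most `ε` times its degree in `G`. -/
theorem stmt15 (ε : ℝ) (hε : 0 < ε) (m : ℕ) (hm : 1 ≤ m) :
    ∃ L : ℕ, ∀ (V : Type) [Fintype V] (G : SimpleGraph V),
      SGEdgeConn G (2 ^ (2 + m + ⌈Real.logb 2 (1 / ε)⌉₊)) →
      (∀ v : V, L ≤ Nat.card (G.neighborSet v)) →
      ∃ T : Fin (2 ^ m) → SimpleGraph V,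
        (∀ i, T i ≤ G) ∧ (∀ i, (T i).IsTree) ∧
        (Pairwise fun i j => Disjoint ((T i).edgeSet) ((T j).edgeSet)) ∧
        ∀ v : V,
          (∑ i, (Nat.card ((T i).neighborSet v) : ℝ)) ≤
            ε * (Nat.card (G.neighborSet v) : ℝ) := by
  refine ⟨⌈8 / ε⌉₊, fun V _ G hG hdeg => ?_⟩
  have := hG.nonempty (by positivity)
  exact stmt15_general hG.isEdgeConnected
    (by rw [Fintype.card_fin, ← pow_succ']; exact Nat.pow_le_pow_right two_pos (by lia))
    (by simpa using four_mul_two_pow_le_mul_two_pow_ceil_logb hε m)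
    fun v => (div_le_iff₀' hε).1 ((Nat.le_ceil _).trans (mod_cast hdeg v))
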